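/- For three pairwise distinct letters a, b, c, the language L = {a^n b^n c^n : n ≥ 1} belongs neither to PCCFL nor to shuffleCFL. -/

import Mathlib

/-- `IsInterleaving w v u` means `u` is an interleaving of `w` and `v`. -/
inductive IsInterleaving {α : Type} : List α → List α → List α → Prop
  | nil : IsInterleaving [] [] []
  | left {a : α} {w v u : List α} : IsInterleaving w v u → IsInterleaving (a :: w) v (a :: u)
  | right {a : α} {w v u : List α} : IsInterleaving w v u → IsInterleaving w (a :: v) (a :: u)

/-- Shuffle of two languages. -/
def shuffleLang {α : Type} (L K : Set (List α)) : Set (List α) :=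
  {u | ∃ w ∈ L, ∃ v ∈ K, IsInterleaving w v u}

/-- A partially-commutative context-free grammar in Greibach form. -/
structure PCGrammar (α : Type) : Type 1 where
  V : Type
  finV : Finite V
  start : V
  prods : Set (V × α × List V)
  finP : prods.Finite
  indep : V → V → Prop
  indep_symm : ∀ {X Y : V}, indep X Y → indep Y X
  indep_irrefl : ∀ X : V, ¬ indep X X

/-- `PCDerives G γ w` : configuration `γ` derives the empty configuration producing word `w`,
using production steps (at the head) and swap steps of independent adjacent nonterminals. -/
inductive PCDerives {α : Type} (G : PCGrammar α) : List G.V → List α → Prop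
  | nil : PCDerives G [] []
  | prod {X : G.V} {a : α} {γ β : List G.V} {w : List α} :
      (X, a, γ) ∈ G.prods → PCDerives G (γ ++ β) w → PCDerives G (X :: β) (a :: w)
  | swap {η β : List G.V} {X Y : G.V} {w : List α} :
      G.indep X Y → PCDerives G (η ++ Y :: X :: β) w → PCDerives G (η ++ X :: Y :: β) w

/-- The language generated by a PC-grammar. -/
def PCGrammar.lang {α : Type} (G : PCGrammar α) : Set (List α) :=
  {w | PCDerives G [G.start] w}

/-- The class of partially-commutative context-free languages. -/
def IsPCCFL {α : Type} (L : Set (List α)) : Prop :=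
  ∃ G : PCGrammar α, G.lang = L

/-- The dependence relation (complement of independence) is transitive. -/
def PCGrammar.depTransitive {α : Type} (G : PCGrammar α) : Prop :=
  ∀ X Y Z : G.V, ¬ G.indep X Y → ¬ G.indep Y Z → ¬ G.indep X Z

/-- The subclass of PCCFL given by grammars with transitive dependence. -/
def IsTrPCCFL {α : Type} (L : Set (List α)) : Prop :=
  ∃ G : PCGrammar α, G.depTransitive ∧ G.lang = L

/-- Terms of a PA-grammar (shuffle context-free grammar). -/
inductive PATerm (V : Type) : Type
  | eps : PATerm V
  | var (X : V) : PATerm V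
  | seq (t u : PATerm V) : PATerm V
  | par (t u : PATerm V) : PATerm V

/-- Structural equivalence of PA-terms: associativity of both compositions,
commutativity of parallel composition, and neutrality of the empty term. -/
inductive PAEq {V : Type} : PATerm V → PATerm V → Prop
  | refl (t : PATerm V) : PAEq t t
  | symm {t u : PATerm V} : PAEq t u → PAEq u t
  | trans {t u v : PATerm V} : PAEq t u → PAEq u v → PAEq t v
  | seq_assoc (t u v : PATerm V) : PAEq ((t.seq u).seq v) (t.seq (u.seq v))
  | par_assoc (t u v : PATerm V) : PAEq ((t.par u).par v) (t.par (u.par v))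
  | par_comm (t u : PATerm V) : PAEq (t.par u) (u.par t)
  | seq_eps_left (t : PATerm V) : PAEq (PATerm.eps.seq t) t
  | seq_eps_right (t : PATerm V) : PAEq (t.seq PATerm.eps) t
  | par_eps (t : PATerm V) : PAEq (t.par PATerm.eps) t
  | seq_congr {t t' u u' : PATerm V} : PAEq t t' → PAEq u u' → PAEq (t.seq u) (t'.seq u')
  | par_congr {t t' u u' : PATerm V} : PAEq t t' → PAEq u u' → PAEq (t.par u) (t'.par u')

/-- Single steps of a PA-grammar with production set `P`. -/
inductive PAStep {V α : Type} (P : Set (V × α × PATerm V)) : PATerm V → α → PATerm V → Prop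
  | prod {X : V} {a : α} {t : PATerm V} : (X, a, t) ∈ P → PAStep P (PATerm.var X) a t
  | seq_left {t t' u : PATerm V} {a : α} : PAStep P t a t' → PAStep P (t.seq u) a (t'.seq u)
  | par_left {t t' u : PATerm V} {a : α} : PAStep P t a t' → PAStep P (t.par u) a (t'.par u)
  | par_right {t u u' : PATerm V} {a : α} : PAStep P u a u' → PAStep P (t.par u) a (t.par u')

/-- `PAGen P t w` : term `t` derives the empty term producing word `w`
(terms are considered up to structural equivalence). -/
inductive PAGen {V α : Type} (P : Set (V × α × PATerm V)) : PATerm V → List α → Prop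
  | done : PAGen P PATerm.eps []
  | eqv {t t' : PATerm V} {w : List α} : PAEq t t' → PAGen P t' w → PAGen P t w
  | step {t t' : PATerm V} {a : α} {w : List α} :
      PAStep P t a t' → PAGen P t' w → PAGen P t (a :: w)

/-- A PA-grammar (shuffle context-free grammar). -/
structure PAGrammar (α : Type) : Type 1 where
  V : Type
  finV : Finite V
  start : V
  prods : Set (V × α × PATerm V)
  finP : prods.Finite

/-- The language generated by a PA-grammar. -/
def PAGrammar.lang {α : Type} (G : PAGrammar α) : Set (List α) :=
  {w | PAGen G.prods (PATerm.var G.start) w}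

/-- The class of languages of PA-grammars (context-free grammars with shuffle). -/
def IsShuffleCFL {α : Type} (L : Set (List α)) : Prop :=
  ∃ G : PAGrammar α, G.lang = L

/-- A single swap of two adjacent letters independent according to `J`. -/
inductive AdjSwap {α : Type} (J : α → α → Prop) : List α → List α → Prop
  | swap (x y : List α) {a b : α} : J a b → AdjSwap J (x ++ a :: b :: y) (x ++ b :: a :: y)

/-- Trace equivalence: finitely many swaps of adjacent independent letters. -/
def TraceEquiv {α : Type} (J : α → α → Prop) : List α → List α → Prop :=
  Relation.ReflTransGen (AdjSwap J)

/-- Trace closure of a language with respect to letter-independence `J`. -/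
def traceClosure {α : Type} (J : α → α → Prop) (L : Set (List α)) : Set (List α) :=
  {w | ∃ v ∈ L, TraceEquiv J v w}

/-- The class of trace closures of context-free languages. -/
def IsTraceCFL {α : Type} (L : Set (List α)) : Prop :=
  ∃ J : α → α → Prop, (∀ a b, J a b → J b a) ∧ (∀ a, ¬ J a a) ∧
    ∃ L₀ : Language α, L₀.IsContextFree ∧ traceClosure J L₀ = L

/-- `listPow s m` is the word `s^m`. -/
def listPow {α : Type} (s : List α) (m : ℕ) : List α :=
  (List.replicate m s).flatten

/-- The shuffle-pumping condition. -/
def ShufflePumping {α : Type} (L : Set (List α)) : Prop :=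
  ∃ N : ℕ, ∀ w ∈ L, w.length > N →
    ∃ x y z s t : List α,
      (∃ yt u : List α, IsInterleaving y t yt ∧ IsInterleaving (s ++ yt) z u ∧ w = x ++ u) ∧
      1 ≤ s.length ∧ (s ++ y ++ t).length ≤ N ∧
      ∀ m : ℕ, x ++ listPow s m ++ y ++ listPow t m ++ z ∈ L

/-- The concatenation-pumping condition. -/
def ConcatPumping {α : Type} (L : Set (List α)) : Prop :=
  ∃ N : ℕ, ∀ w ∈ L, w.length > N →
    ∃ x y z s t : List α,
      w = x ++ y ++ z ∧
      1 ≤ (s ++ t).length ∧ (s ++ t).length ≤ N ∧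
      ∀ m : ℕ, x ++ listPow s m ++ y ++ listPow t m ++ z ∈ L

/-!
Swap steps and parallel composition only change the order in which the nonterminals of a
configuration are rewritten. Rewriting from left to right instead produces a context-free
sublanguage `K` of the generated language `L` such that every word of `L` is a permutation of a
word of `K`. If `L` is infinite, so is `K`, hence `K` contains all words `u pᵐ w qᵐ v` for some
`u, p, w, q, v` with `p ≠ []`.

In `aⁿbⁿcⁿ` the number `n` can be read off both from the position of the first `b` and from that of
the last one, counted from the end. So if all `u pᵐ w qᵐ v` are of this form, neither the common
prefix `u p` nor the common suffix `q v` of two of them contains a `b`. Pumping then keeps the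
number of `b`s while it increases the length, which is three times that number.
-/

section Words

variable {α : Type*}

/-- The word `w` in the context `p _ q`. The context comes first, so that `listWrap p q` is a
self-map of the words, to be used with `Set.MapsTo` and iterated. -/
def listWrap (p q w : List α) : List α :=
  p ++ w ++ q

theorem listWrap_comp (p q p' q' : List α) :
    listWrap p q ∘ listWrap p' q' = listWrap (p ++ p') (q' ++ q) := by
  funext w
  simp only [Function.comp_apply, listWrap, List.append_assoc]

theorem finite_of_forall_exists_perm {K L : Set (List α)} (hK : K.Finite)
    (h : ∀ w ∈ L, ∃ w' ∈ K, w'.Perm w) : L.Finite := by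
  refine (hK.biUnion fun w' _ => w'.permutations.finite_toSet).subset fun w hw => ?_
  obtain ⟨w', hw', hperm⟩ := h w hw
  exact Set.mem_biUnion hw' (List.mem_permutations.2 hperm.symm)

theorem exists_infinite_mapsTo_listWrap_prod {Ls : List (Language α)} (h : Set.Infinite Ls.prod) :
    ∃ L ∈ Ls, Set.Infinite L ∧ ∃ p q, Set.MapsTo (listWrap p q) L Ls.prod := by
  induction Ls with
  | nil => exact absurd (Set.finite_singleton []) h
  | cons L Ls ih =>
    rw [List.prod_cons] at h ⊢
    obtain ⟨-, p, hp, q, hq, -⟩ := h.nonempty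
    by_cases hL : Set.Finite L
    · have hLs : Set.Infinite Ls.prod := fun hfin => h (hL.image2 _ hfin)
      obtain ⟨M, hM, hMinf, p', q', hmaps⟩ := ih hLs
      refine ⟨M, List.mem_cons_of_mem _ hM, hMinf, p ++ p', q', fun w hw => ?_⟩
      exact ⟨p, hp, _, hmaps hw, by simp only [listWrap, List.append_assoc]⟩
    · exact ⟨L, List.mem_cons_self, hL, [], q, fun w hw => ⟨w, hw, q, hq, rfl⟩⟩

end Words

section Pumping

variable {α : Type}

theorem listPow_succ (s : List α) (m : ℕ) : listPow s (m + 1) = s ++ listPow s m := rfl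

theorem listPow_succ_eq_append_self (s : List α) (m : ℕ) :
    listPow s (m + 1) = listPow s m ++ s := by
  simp only [listPow, List.replicate_succ', List.flatten_append, List.flatten_singleton]

theorem length_listPow (s : List α) (m : ℕ) : (listPow s m).length = m * s.length := by
  simp only [listPow, List.length_flatten, List.map_replicate, List.sum_replicate, smul_eq_mul]

theorem iterate_listWrap (p q : List α) (m : ℕ) :
    (listWrap p q)^[m] = listWrap (listPow p m) (listPow q m) := by
  induction m with
  | zero => funext w; simp [listWrap, listPow]
  | succ m ih =>
    rw [Function.iterate_succ', ih, listWrap_comp, ← listPow_succ, ← listPow_succ_eq_append_self]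

/-- `L` contains all words `u pᵐ w qᵐ v`, for suitable `u`, `p`, `w`, `q`, `v` with `p` nonempty. -/
def HasPumpedFamily (L : Set (List α)) : Prop :=
  ∃ u p w q v : List α, p ≠ [] ∧ ∀ m, u ++ listPow p m ++ w ++ listPow q m ++ v ∈ L

theorem HasPumpedFamily.mono {K L : Set (List α)} (hK : HasPumpedFamily K) (hKL : K ⊆ L) :
    HasPumpedFamily L :=
  let ⟨u, p, w, q, v, hp, h⟩ := hK
  ⟨u, p, w, q, v, hp, fun m => hKL (h m)⟩

end Pumping

theorem exists_rel_self_of_forall_exists_rel {β : Type*} [Finite β] [Nonempty β]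
    (r : β → β → Prop) [IsTrans β r] (h : ∀ x, ∃ y, r x y) : ∃ x, r x x := by
  by_contra! hirrefl
  have : Std.Irrefl (Function.swap r) := ⟨hirrefl⟩
  obtain ⟨x, -, hx⟩ := (Finite.wellFounded_of_trans_of_irrefl (Function.swap r)).has_min
    Set.univ Set.univ_nonempty
  obtain ⟨y, hxy⟩ := h x
  exact hx y trivial hxy

/-- Derivations of a context-free grammar in Greibach form with production set `P`: the nonterminals
of a sentential form `γ` are rewritten to terminal words independently of each other, and `w` is the
concatenation of these words. -/
inductive GreibachDerives {V α : Type*} (P : Set (V × α × List V)) : List V → List α → Prop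
  | nil : GreibachDerives P [] []
  | cons {X : V} {a : α} {γ β : List V} {u v : List α} :
      (X, a, γ) ∈ P → GreibachDerives P γ u → GreibachDerives P β v →
        GreibachDerives P (X :: β) (a :: (u ++ v))

/-- The language that the sentential form `γ` generates in a Greibach grammar. -/
def greibachLang {V α : Type*} (P : Set (V × α × List V)) (γ : List V) : Language α :=
  {w | GreibachDerives P γ w}

section Greibach

variable {V α : Type*} {P : Set (V × α × List V)}

theorem greibachLang_nil : greibachLang P [] = 1 :=
  Language.ext fun w => ⟨fun h => by cases h; rfl, fun h => by cases h; exact .nil⟩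

theorem greibachLang_cons (X : V) (γ : List V) :
    greibachLang P (X :: γ) = greibachLang P [X] * greibachLang P γ := by
  ext w
  rw [Language.mem_mul]
  constructor
  · rintro (_ | ⟨hp, hu, hv⟩)
    exact ⟨_, .cons hp hu .nil, _, hv, by simp only [List.append_nil, List.cons_append]⟩
  · rintro ⟨_, _ | ⟨hp, hu, _ | _⟩, v, hv, rfl⟩
    rw [List.append_nil, List.cons_append]
    exact .cons hp hu hv

theorem greibachLang_eq_prod (γ : List V) :
    greibachLang P γ = (γ.map fun X => greibachLang P [X]).prod := by
  induction γ with
  | nil => exact greibachLang_nil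
  | cons X γ ih => rw [greibachLang_cons, ih, List.map_cons, List.prod_cons]

theorem greibachLang_append (γ β : List V) :
    greibachLang P (γ ++ β) = greibachLang P γ * greibachLang P β := by
  rw [greibachLang_eq_prod, List.map_append, List.prod_append, ← greibachLang_eq_prod,
    ← greibachLang_eq_prod]

theorem greibachDerives_append_iff {γ β : List V} {w : List α} :
    GreibachDerives P (γ ++ β) w ↔
      ∃ u, GreibachDerives P γ u ∧ ∃ v, GreibachDerives P β v ∧ u ++ v = w :=
  Set.ext_iff.1 (greibachLang_append γ β) w

theorem GreibachDerives.append {γ β : List V} {u v : List α} (hu : GreibachDerives P γ u)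
    (hv : GreibachDerives P β v) : GreibachDerives P (γ ++ β) (u ++ v) :=
  greibachDerives_append_iff.2 ⟨u, hu, v, hv, rfl⟩

theorem GreibachDerives.exists_perm {γ δ : List V} (hγδ : γ.Perm δ) {w : List α}
    (h : GreibachDerives P γ w) : ∃ w', GreibachDerives P δ w' ∧ w'.Perm w := by
  induction hγδ generalizing w with
  | nil => exact ⟨w, h, .refl w⟩
  | cons X _ ih =>
    cases h with | cons hp hu hv =>
    obtain ⟨v', hv', hperm⟩ := ih hv
    exact ⟨_, .cons hp hu hv', (hperm.append_left _).cons _⟩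
  | swap X Y γ =>
    obtain ⟨u, hu, v, hv, rfl⟩ := greibachDerives_append_iff (γ := [Y, X]).1 h
    obtain ⟨y, hy, x, hx, rfl⟩ := greibachDerives_append_iff (γ := [Y]) (β := [X]).1 hu
    exact ⟨x ++ y ++ v, (hx.append hy).append hv, List.perm_append_comm.append_right v⟩
  | trans _ _ ih₁ ih₂ =>
    obtain ⟨w₁, h₁, hperm₁⟩ := ih₁ h
    obtain ⟨w₂, h₂, hperm₂⟩ := ih₂ h₁
    exact ⟨w₂, h₂, hperm₂.trans hperm₁⟩

theorem exists_production_infinite_greibachLang (hP : P.Finite) {X : V}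
    (hX : Set.Infinite (greibachLang P [X])) :
    ∃ a γ, (X, a, γ) ∈ P ∧ Set.Infinite (greibachLang P γ) := by
  by_contra! hfin
  have hsub : ∀ w ∈ greibachLang P [X],
      w ∈ ⋃ r ∈ {r ∈ P | r.1 = X}, List.cons r.2.1 '' greibachLang P r.2.2 := by
    rintro _ (_ | ⟨hp, hu, _ | _⟩)
    exact Set.mem_biUnion ⟨hp, rfl⟩ ⟨_, hu, by rw [List.append_nil]⟩
  refine hX (Set.Finite.subset ((hP.subset (Set.sep_subset _ _)).biUnion ?_) hsub)
  rintro ⟨_, a, γ⟩ ⟨hp, rfl⟩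
  exact (Set.not_infinite.1 (hfin a γ hp)).image _

theorem exists_infinite_mapsTo_listWrap_greibachLang (hP : P.Finite) {X : V}
    (hX : Set.Infinite (greibachLang P [X])) :
    ∃ Y, Set.Infinite (greibachLang P [Y]) ∧ ∃ p q, p ≠ [] ∧
      Set.MapsTo (listWrap p q) (greibachLang P [Y]) (greibachLang P [X]) := by
  obtain ⟨a, γ, hp, hγ⟩ := exists_production_infinite_greibachLang hP hX
  rw [greibachLang_eq_prod] at hγ
  obtain ⟨_, hmem, hinf, p, q, hmaps⟩ := exists_infinite_mapsTo_listWrap_prod hγ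
  obtain ⟨Y, -, rfl⟩ := List.mem_map.1 hmem
  rw [← greibachLang_eq_prod] at hmaps
  refine ⟨Y, hinf, a :: p, q, List.cons_ne_nil a p, fun w hw => ?_⟩
  have h : GreibachDerives P [X] (a :: (listWrap p q w ++ [])) := .cons hp (hmaps hw) .nil
  rwa [List.append_nil] at h

end Greibach

section GreibachPumping

variable {V : Type*} {α : Type} {P : Set (V × α × List V)}

theorem hasPumpedFamily_greibachLang [Finite V] (hP : P.Finite) {S : V}
    (hS : Set.Infinite (greibachLang P [S])) : HasPumpedFamily (greibachLang P [S]) := by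
  -- `r` has a cycle on the finite type `T`; its context can be iterated.
  let T := {X : V // Set.Infinite (greibachLang P [X]) ∧
    ∃ u v, Set.MapsTo (listWrap u v) (greibachLang P [X]) (greibachLang P [S])}
  let r : T → T → Prop := fun X Y => ∃ p q, p ≠ [] ∧
    Set.MapsTo (listWrap p q) (greibachLang P [Y.1]) (greibachLang P [X.1])
  have : IsTrans T r := ⟨fun X Y Z ⟨p, q, hp, hpq⟩ ⟨p', q', _, hpq'⟩ =>
    ⟨p ++ p', q' ++ q, List.append_ne_nil_of_left_ne_nil hp p',
      listWrap_comp p q p' q' ▸ hpq.comp hpq'⟩⟩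
  have : Nonempty T := ⟨S, hS, [], [], fun w hw => by
    simpa only [listWrap, List.nil_append, List.append_nil] using hw⟩
  have hsucc : ∀ X, ∃ Y, r X Y := by
    rintro ⟨X, hX, u, v, huv⟩
    obtain ⟨Y, hY, p, q, hp, hpq⟩ := exists_infinite_mapsTo_listWrap_greibachLang hP hX
    exact ⟨⟨Y, hY, u ++ p, q ++ v, listWrap_comp u v p q ▸ huv.comp hpq⟩, p, q, hp, hpq⟩
  obtain ⟨⟨X, hX, u, v, huv⟩, p, q, hp, hpq⟩ := exists_rel_self_of_forall_exists_rel r hsucc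
  obtain ⟨w, hw⟩ := hX.nonempty
  refine ⟨u, p, w, q, v, hp, fun m => ?_⟩
  have hpump := huv (hpq.iterate m hw)
  rw [iterate_listWrap] at hpump
  simpa only [listWrap, List.append_assoc] using hpump

theorem hasPumpedFamily_of_greibachLang_subset [Finite V] (hP : P.Finite) {S : V}
    {L : Set (List α)} (hL : L.Infinite) (hsub : ∀ w, GreibachDerives P [S] w → w ∈ L)
    (hperm : ∀ w ∈ L, ∃ w', GreibachDerives P [S] w' ∧ w'.Perm w) : HasPumpedFamily L :=
  (hasPumpedFamily_greibachLang hP fun hfin =>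
    hL (finite_of_forall_exists_perm hfin hperm)).mono hsub

end GreibachPumping

section PCGrammar

variable {α : Type} {G : PCGrammar α}

theorem PCDerives.append {γ β : List G.V} {u v : List α} (hu : PCDerives G γ u)
    (hv : PCDerives G β v) : PCDerives G (γ ++ β) (u ++ v) := by
  induction hu with
  | nil => exact hv
  | prod hp _ ih => exact .prod hp (by rwa [List.append_assoc] at ih)
  | swap hI _ ih =>
    simp only [List.append_assoc, List.cons_append] at ih ⊢
    exact .swap hI ih

theorem GreibachDerives.pcDerives {γ : List G.V} {w : List α}
    (h : GreibachDerives G.prods γ w) : PCDerives G γ w := by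
  induction h with
  | nil => exact .nil
  | cons hp _ _ ihu ihv => exact .prod hp (ihu.append ihv)

theorem PCDerives.exists_greibachDerives {γ : List G.V} {w : List α} (h : PCDerives G γ w) :
    ∃ w', GreibachDerives G.prods γ w' ∧ w'.Perm w := by
  induction h with
  | nil => exact ⟨[], .nil, .refl []⟩
  | prod hp _ ih =>
    obtain ⟨_, h', hperm⟩ := ih
    obtain ⟨u, hu, v, hv, rfl⟩ := greibachDerives_append_iff.1 h'
    exact ⟨_, .cons hp hu hv, hperm.cons _⟩
  | swap _ _ ih =>
    obtain ⟨w₁, h₁, hperm₁⟩ := ih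
    obtain ⟨w₂, h₂, hperm₂⟩ := h₁.exists_perm ((List.Perm.swap _ _ _).append_left _)
    exact ⟨w₂, h₂, hperm₂.trans hperm₁⟩

theorem IsPCCFL.hasPumpedFamily {L : Set (List α)} (h : IsPCCFL L) (hL : L.Infinite) :
    HasPumpedFamily L := by
  obtain ⟨G, rfl⟩ := h
  have := G.finV
  exact hasPumpedFamily_of_greibachLang_subset G.finP hL (fun _ => GreibachDerives.pcDerives)
    fun _ => PCDerives.exists_greibachDerives

end PCGrammar

section PAGrammar

/-- The nonterminals of a PA-term from left to right: the sentential form that remains when parallel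
compositions are read as sequential ones. -/
def PATerm.toList {V : Type} : PATerm V → List V
  | .eps => []
  | .var X => [X]
  | .seq t u => t.toList ++ u.toList
  | .par t u => t.toList ++ u.toList

variable {V α : Type} {P : Set (V × α × PATerm V)}

/-- The Greibach productions obtained from PA-productions by reading parallel compositions as
sequential ones. -/
def sequentialProds (P : Set (V × α × PATerm V)) : Set (V × α × List V) :=
  (fun r => (r.1, r.2.1, r.2.2.toList)) '' P

theorem PAEq.perm_toList {t u : PATerm V} (h : PAEq t u) : t.toList.Perm u.toList := by
  induction h with
  | refl => exact .refl _
  | symm _ ih => exact ih.symm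
  | trans _ _ ih₁ ih₂ => exact ih₁.trans ih₂
  | seq_assoc | par_assoc => exact .of_eq (List.append_assoc _ _ _)
  | par_comm => exact List.perm_append_comm
  | seq_eps_left => exact .refl _
  | seq_eps_right | par_eps => exact .of_eq (List.append_nil _)
  | seq_congr _ _ ih₁ ih₂ | par_congr _ _ ih₁ ih₂ => exact ih₁.append ih₂

theorem PAGen.seq {t t' : PATerm V} {u v : List α} (ht : PAGen P t u) (ht' : PAGen P t' v) :
    PAGen P (t.seq t') (u ++ v) := by
  induction ht with
  | done => exact .eqv (.seq_eps_left t') ht'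
  | eqv heq _ ih => exact .eqv (.seq_congr heq (.refl t')) ih
  | step hstep _ ih => exact .step (.seq_left hstep) ih

theorem PAGen.par {t t' : PATerm V} {u v : List α} (ht : PAGen P t u) (ht' : PAGen P t' v) :
    PAGen P (t.par t') (u ++ v) := by
  induction ht with
  | done => exact .eqv ((PAEq.par_comm _ _).trans (.par_eps t')) ht'
  | eqv heq _ ih => exact .eqv (.par_congr heq (.refl t')) ih
  | step hstep _ ih => exact .step (.par_left hstep) ih

/-- The language of a single nonterminal in a PA-grammar. -/
def paVarLang (P : Set (V × α × PATerm V)) (X : V) : Language α :=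
  {w | PAGen P (.var X) w}

theorem PAGen.of_mem_prod_toList {t : PATerm V} {w : List α}
    (hw : w ∈ (t.toList.map (paVarLang P)).prod) : PAGen P t w := by
  induction t generalizing w with
  | eps => cases hw; exact .done
  | var X => rwa [PATerm.toList, List.map_singleton, List.prod_singleton] at hw
  | seq t u iht ihu =>
    simp only [PATerm.toList, List.map_append, List.prod_append] at hw
    obtain ⟨w₁, hw₁, w₂, hw₂, rfl⟩ := hw
    exact (iht hw₁).seq (ihu hw₂)
  | par t u iht ihu =>
    simp only [PATerm.toList, List.map_append, List.prod_append] at hw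
    obtain ⟨w₁, hw₁, w₂, hw₂, rfl⟩ := hw
    exact (iht hw₁).par (ihu hw₂)

theorem GreibachDerives.mem_prod_paVarLang {γ : List V} {w : List α}
    (h : GreibachDerives (sequentialProds P) γ w) : w ∈ (γ.map (paVarLang P)).prod := by
  induction h with
  | nil => rfl
  | cons hp _ _ ihu ihv =>
    obtain ⟨⟨X, a, t⟩, ht, heq⟩ := hp
    cases heq
    exact ⟨_, PAGen.step (.prod ht) (.of_mem_prod_toList ihu), _, ihv, rfl⟩

theorem GreibachDerives.paGen {t : PATerm V} {w : List α}
    (h : GreibachDerives (sequentialProds P) t.toList w) : PAGen P t w :=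
  .of_mem_prod_toList h.mem_prod_paVarLang

theorem PAStep.exists_greibachDerives {t t' : PATerm V} {a : α} (h : PAStep P t a t')
    {w : List α} (hw : GreibachDerives (sequentialProds P) t'.toList w) :
    ∃ w', GreibachDerives (sequentialProds P) t.toList w' ∧ w'.Perm (a :: w) := by
  induction h generalizing w with
  | prod hp =>
    exact ⟨_, .cons ⟨_, hp, rfl⟩ hw .nil, .of_eq (by rw [List.append_nil])⟩
  | seq_left _ ih | par_left _ ih =>
    obtain ⟨u, hu, v, hv, rfl⟩ := greibachDerives_append_iff.1 hw
    obtain ⟨u', hu', hperm⟩ := ih hu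
    exact ⟨u' ++ v, hu'.append hv, hperm.append_right v⟩
  | par_right _ ih =>
    obtain ⟨u, hu, v, hv, rfl⟩ := greibachDerives_append_iff.1 hw
    obtain ⟨v', hv', hperm⟩ := ih hv
    exact ⟨u ++ v', hu.append hv', (hperm.append_left u).trans List.perm_middle⟩

theorem PAGen.exists_greibachDerives {t : PATerm V} {w : List α} (h : PAGen P t w) :
    ∃ w', GreibachDerives (sequentialProds P) t.toList w' ∧ w'.Perm w := by
  induction h with
  | done => exact ⟨[], .nil, .refl []⟩
  | eqv heq _ ih =>
    obtain ⟨w₁, h₁, hperm₁⟩ := ih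
    obtain ⟨w₂, h₂, hperm₂⟩ := h₁.exists_perm heq.perm_toList.symm
    exact ⟨w₂, h₂, hperm₂.trans hperm₁⟩
  | step hstep _ ih =>
    obtain ⟨w₁, h₁, hperm₁⟩ := ih
    obtain ⟨w₂, h₂, hperm₂⟩ := hstep.exists_greibachDerives h₁
    exact ⟨w₂, h₂, hperm₂.trans (hperm₁.cons _)⟩

theorem IsShuffleCFL.hasPumpedFamily {L : Set (List α)} (h : IsShuffleCFL L)
    (hL : L.Infinite) : HasPumpedFamily L := by
  obtain ⟨G, rfl⟩ := h
  have := G.finV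
  exact hasPumpedFamily_of_greibachLang_subset (G.finP.image _) hL
    (fun _ => GreibachDerives.paGen (t := .var G.start)) fun _ => PAGen.exists_greibachDerives

end PAGrammar

/-- The word `aⁿbⁿcⁿ`. -/
def blockWord {α : Type} (a b c : α) (n : ℕ) : List α :=
  List.replicate n a ++ List.replicate n b ++ List.replicate n c

section BlockWord

variable {α : Type} {a b c : α}

theorem length_blockWord (n : ℕ) : (blockWord a b c n).length = 3 * n := by
  simp only [blockWord, List.length_append, List.length_replicate]
  ring

theorem blockWord_injective : Function.Injective (blockWord a b c) := fun n m h => by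
  simpa only [length_blockWord, mul_right_inj' three_ne_zero] using congrArg List.length h

theorem reverse_blockWord (n : ℕ) : (blockWord a b c n).reverse = blockWord c b a n := by
  simp only [blockWord, List.reverse_append, List.reverse_replicate, List.append_assoc]

theorem count_blockWord [DecidableEq α] (hab : a ≠ b) (hbc : b ≠ c) (n : ℕ) :
    (blockWord a b c n).count b = n := by
  simp [blockWord, List.count_replicate, hab, hbc.symm]

theorem idxOf_blockWord [DecidableEq α] (hab : a ≠ b) {n : ℕ} (hb : b ∈ blockWord a b c n) :
    (blockWord a b c n).idxOf b = n := by
  obtain _ | n := n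
  · simp [blockWord] at hb
  · rw [blockWord, List.append_assoc, List.idxOf_append_of_notMem
      (fun h => hab (List.eq_of_mem_replicate h).symm), List.length_replicate,
      List.replicate_succ, List.cons_append, List.idxOf_cons_self, add_zero]

theorem notMem_of_isPrefix_blockWord (hab : a ≠ b) {n m : ℕ} (hnm : n ≠ m) {u : List α}
    (hn : u <+: blockWord a b c n) (hm : u <+: blockWord a b c m) : b ∉ u := by
  classical
  intro hb
  have idxOf_eq {k : ℕ} (hk : u <+: blockWord a b c k) : u.idxOf b = k := by
    rw [← idxOf_blockWord hab (hk.subset hb)]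
    obtain ⟨r, hr⟩ := hk
    rw [← hr, List.idxOf_append_of_mem hb]
  exact hnm ((idxOf_eq hn).symm.trans (idxOf_eq hm))

theorem notMem_of_isSuffix_blockWord (hbc : b ≠ c) {n m : ℕ} (hnm : n ≠ m) {v : List α}
    (hn : v <:+ blockWord a b c n) (hm : v <:+ blockWord a b c m) : b ∉ v := by
  rw [← List.reverse_prefix, reverse_blockWord] at hn hm
  exact fun hb => notMem_of_isPrefix_blockWord hbc.symm hnm hn hm (List.mem_reverse.2 hb)

theorem not_hasPumpedFamily_range_blockWord (hab : a ≠ b) (hbc : b ≠ c) :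
    ¬ HasPumpedFamily (Set.range (blockWord a b c)) := by
  classical
  rintro ⟨u, p, w, q, v, hp, h⟩
  choose f hf using h
  have hlt (m : ℕ) : f m < f (m + 1) := by
    have hlen (k : ℕ) := congrArg List.length (hf k)
    simp only [length_blockWord, List.length_append, length_listPow] at hlen
    have := List.length_pos_iff.2 hp
    linarith [hlen m, hlen (m + 1), add_one_mul m p.length, add_one_mul m q.length]
  have hprefix (m : ℕ) : u ++ p <+: blockWord a b c (f (m + 1)) :=
    ⟨listPow p m ++ w ++ listPow q (m + 1) ++ v, by
      simp only [hf, listPow_succ p, List.append_assoc]⟩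
  have hsuffix (m : ℕ) : q ++ v <:+ blockWord a b c (f (m + 1)) :=
    ⟨u ++ listPow p (m + 1) ++ w ++ listPow q m, by
      simp only [hf, listPow_succ_eq_append_self q, List.append_assoc]⟩
  have hup : b ∉ u ++ p := notMem_of_isPrefix_blockWord hab (hlt 1).ne (hprefix 0) (hprefix 1)
  have hqv : b ∉ q ++ v := notMem_of_isSuffix_blockWord hbc (hlt 1).ne (hsuffix 0) (hsuffix 1)
  have hcount : f 0 = f 1 := by
    rw [← count_blockWord hab hbc (f 0), ← count_blockWord hab hbc (f 1), hf, hf]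
    rw [List.mem_append, not_or] at hup hqv
    simp [listPow, List.count_eq_zero_of_not_mem hup.2, List.count_eq_zero_of_not_mem hqv.1]
  exact (hlt 0).ne hcount

end BlockWord

theorem anbncn_not_pccfl_not_shufflecfl_general {α : Type} {a b c : α} (hab : a ≠ b) (hbc : b ≠ c)
    {L : Set (List α)} (hL : L ⊆ Set.range (blockWord a b c)) (hinf : L.Infinite) :
    ¬ IsPCCFL L ∧ ¬ IsShuffleCFL L :=
  have hnot : ¬ HasPumpedFamily L := fun h =>
    not_hasPumpedFamily_range_blockWord hab hbc (h.mono hL)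
  ⟨fun h => hnot (h.hasPumpedFamily hinf), fun h => hnot (h.hasPumpedFamily hinf)⟩

/-- `{aⁿbⁿcⁿ : n ≥ 1}` is neither in PCCFL nor in shuffleCFL. -/
theorem anbncn_not_pccfl_not_shufflecfl (α : Type) [Finite α]
    (a b c : α) (hab : a ≠ b) (hac : a ≠ c) (hbc : b ≠ c)
    (L : Set (List α))
    (hL : L = {w | ∃ n : ℕ, 1 ≤ n ∧
        w = List.replicate n a ++ List.replicate n b ++ List.replicate n c}) :
    ¬ IsPCCFL L ∧ ¬ IsShuffleCFL L := by
  subst hL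
  refine anbncn_not_pccfl_not_shufflecfl_general hab hbc (fun _ ⟨n, _, hw⟩ => ⟨n, hw.symm⟩) ?_
  exact Set.infinite_of_injective_forall_mem (f := fun n => blockWord a b c (n + 1))
    (blockWord_injective.comp Nat.succ_injective) fun n => ⟨n + 1, n.succ_pos, rfl⟩
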